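/- arXiv:1712.04607 — 2 statements merged into one kernel-verified Lean document; each statement's English description precedes it below -/
import Mathlib

section
/- Let R be an integral domain and n ≥ 2. Then every invertible matrix in M_n(R) is a sum of three idempotent matrices if and only if R is isomorphic to Z_2 or to Z_3. -/
/-- `T` is a sum of three idempotent endomorphisms. -/
def SumThree {K V : Type*} [Field K] [AddCommMonoid V] [Module K V] (T : V →ₗ[K] V) : Prop :=
  ∃ E₁ E₂ E₃ : V →ₗ[K] V, E₁ ∘ₗ E₁ = E₁ ∧ E₂ ∘ₗ E₂ = E₂ ∧ E₃ ∘ₗ E₃ = E₃ ∧ T = E₁ + E₂ + E₃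

lemma sumThree_of_basis {K V : Type*} [Field K] [AddCommGroup V] [Module K V]
    (T : V →ₗ[K] V) (m : ℕ) (v : ℕ → V) (b : Module.Basis (Fin (m+1)) K V)
    (hb : ∀ i, b i = v i) (α β : K) (hα : α * α = α) (hβ : β * β = β)
    (h0 : 0 < m → T (v 0) = v 1 + (1 + β) • v 0)
    (hT : ∀ i, 0 < i → i < m → T (v i) = v (i+1) + v i)
    (htr : LinearMap.trace K V T = (m : K) + 1 + α + β) : SumThree T := by
  set F₁ : ℕ → V := fun i => if i % 2 = 0 then (if i < m then v i + v (i+1) else α • v i) else 0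
    with hF₁
  set F₂ : ℕ → V := fun i => if i = 0 then β • v 0 else
    if i % 2 = 1 then (if i < m then v i + v (i+1) else α • v i) else 0 with hF₂
  set E₁ := b.constr K (fun i => F₁ i) with hE₁
  set E₂ := b.constr K (fun i => F₂ i) with hE₂
  have e1 : ∀ i, i ≤ m → E₁ (v i) = F₁ i := by
    intro i hi
    have := b.constr_basis K (fun i => F₁ i) ⟨i, by omega⟩
    rw [hb] at this
    exact this
  have e2 : ∀ i, i ≤ m → E₂ (v i) = F₂ i := by
    intro i hi
    have := b.constr_basis K (fun i => F₂ i) ⟨i, by omega⟩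
    rw [hb] at this
    exact this
  set u : V := T (v m) - E₁ (v m) - E₂ (v m) with hu
  set c := b.coord (Fin.last m) with hc
  have cv : ∀ i, i ≤ m → c (v i) = if i = m then 1 else 0 := by
    intro i hi
    have : v i = b ⟨i, by omega⟩ := by rw [hb]
    rw [this, hc, Module.Basis.coord_apply, Module.Basis.repr_self, Finsupp.single_apply]
    simp [Fin.ext_iff]
  -- trace computation
  have tr : LinearMap.trace K V T = ∑ i, b.coord i (T (b i)) := by
    rw [LinearMap.trace_eq_matrix_trace K b, Matrix.trace]
    simp [LinearMap.toMatrix_apply]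
  have cu : c u = 1 := by
    rw [Fin.sum_univ_castSucc, ← hc, hb] at tr
    rw [hu, map_sub, map_sub, e1 m le_rfl, e2 m le_rfl]
    have cvm : c (v m) = 1 := by rw [cv m le_rfl]; simp
    rcases Nat.eq_zero_or_pos m with rfl | hm
    · simp at tr
      simp [hF₁, hF₂, cvm]
      rw [← tr, htr]; simp only [Nat.cast_zero]; ring
    · obtain ⟨k, rfl⟩ : ∃ k, m = k + 1 := ⟨m - 1, by omega⟩
      have cc : ∀ (i : Fin (k+1+1)) (j : ℕ) (hj : j < k+1+1), b.coord i (v j) = if j = i then 1 else 0 := by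
        intro i j hj
        have : v j = b ⟨j, hj⟩ := by rw [hb]
        rw [this, Module.Basis.coord_apply, Module.Basis.repr_self, Finsupp.single_apply]
        simp [Fin.ext_iff]
      rw [Fin.sum_univ_succ] at tr
      have s0 : b.coord (Fin.castSucc (0 : Fin (k+1))) (T (b (Fin.castSucc (0 : Fin (k+1))))) = 1 + β := by
        rw [hb]
        simp only [Fin.castSucc_zero, Fin.val_zero]
        rw [h0 hm, map_add, map_smul, cc _ _ (by omega), cc _ _ (by omega)]
        simp
      have s1 : ∀ i : Fin k, b.coord (Fin.castSucc i.succ) (T (b (Fin.castSucc i.succ))) = 1 := by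
        intro i
        rw [hb]
        simp only [Fin.val_castSucc, Fin.val_succ]
        rw [hT _ (by omega) (by omega), map_add, cc _ _ (by omega), cc _ _ (by omega)]
        simp
      rw [s0, Finset.sum_congr rfl (fun i _ => s1 i), htr] at tr
      simp at tr
      have key : c (F₁ (k+1)) + c (F₂ (k+1)) = α := by
        rcases Nat.mod_two_eq_zero_or_one (k+1) with h | h <;> simp [hF₁, hF₂, h, cvm]
      have : c (T (v (k+1))) = 1 + α := by linear_combination -tr
      rw [this]; linear_combination -key
  refine ⟨E₁, E₂, c.smulRight u, ?_, ?_, ?_, ?_⟩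
  · refine b.ext fun i => ?_
    obtain ⟨i, hi⟩ := i
    simp only [hb, LinearMap.comp_apply]
    rw [e1 i (by omega)]
    by_cases h : i % 2 = 0
    · by_cases h' : i < m
      · have h2 : (i+1) % 2 ≠ 0 := by omega
        simp only [hF₁, h, h', if_true]
        rw [map_add, e1 i (by omega), e1 (i+1) (by omega)]
        simp [hF₁, h, h', h2]
      · simp only [hF₁, h, h', if_true, if_false]
        rw [map_smul, e1 i (by omega)]
        simp [hF₁, h, h', smul_smul, hα]
    · simp [hF₁, h]
  · refine b.ext fun i => ?_
    obtain ⟨i, hi⟩ := i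
    simp only [hb, LinearMap.comp_apply]
    rw [e2 i (by omega)]
    by_cases h0 : i = 0
    · subst h0
      simp only [hF₂, if_true]
      rw [map_smul, e2 0 (by omega)]
      simp [hF₂, smul_smul, hβ]
    by_cases h : i % 2 = 1
    · by_cases h' : i < m
      · have h2 : (i+1) % 2 ≠ 1 := by omega
        simp only [hF₂, h, h', h0, if_true, if_false]
        rw [map_add, e2 i (by omega), e2 (i+1) (by omega)]
        simp [hF₂, h, h', h2, h0]
      · simp only [hF₂, h, h', h0, if_true, if_false]
        rw [map_smul, e2 i (by omega)]
        simp [hF₂, h, h', smul_smul, hα, h0]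
    · simp [hF₂, h, h0]
  · ext x
    simp [cu]
  · refine b.ext fun i => ?_
    obtain ⟨i, hi⟩ := i
    simp only [hb, LinearMap.add_apply, LinearMap.smulRight_apply]
    rw [cv i (by omega)]
    by_cases him : i = m
    · subst him
      simp [hu]
    · simp only [him, if_false, zero_smul, add_zero]
      rw [e1 i (by omega), e2 i (by omega)]
      have h' : i < m := by omega
      by_cases hi0 : i = 0
      · subst hi0
        rw [h0 h']
        simp [hF₁, hF₂, h']
        module
      · rw [hT i (by omega) h']
        rcases Nat.mod_two_eq_zero_or_one i with h | h <;> simp [hF₁, hF₂, h, h', hi0] <;> abel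

lemma sumThree_cyclic {K V : Type*} [Field K] [AddCommGroup V] [Module K V]
    (hK : ∀ s : K, s = 0 ∨ s = 1 ∨ s = 1 + 1)
    (T : V →ₗ[K] V) (n : ℕ) (w : V) (b : Module.Basis (Fin n) K V)
    (hb : ∀ i, b i = (T ^ (i : ℕ)) w) : SumThree T := by
  rcases n with _ | m
  · have : Subsingleton V := b.repr.toEquiv.subsingleton
    exact ⟨0, 0, 0, by simp, by simp, by simp, Subsingleton.elim _ _⟩
  obtain ⟨α, β, hα, hβ, hs⟩ : ∃ α β : K, α * α = α ∧ β * β = β ∧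
      LinearMap.trace K V T - m - 1 = α + β := by
    rcases hK (LinearMap.trace K V T - m - 1) with h | h | h
    · exact ⟨0, 0, by simp, by simp, by simp [h]⟩
    · exact ⟨1, 0, by simp, by simp, by simp [h]⟩
    · exact ⟨1, 1, by simp, by simp, by simp [h]⟩
  let d : ℕ → K := fun i => if i = 0 then 1 + β else 1
  let v : ℕ → V := fun i => Nat.rec w (fun j x => T x - d j • x) i
  have hv : ∀ i, v (i+1) = T (v i) - d i • v i := fun i => rfl
  have hTv : ∀ i, T (v i) = v (i+1) + d i • v i := fun i => by rw [hv]; abel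
  have hsp : ∀ i, (T ^ i) w ∈ Submodule.span K (v '' Set.Iic i) := by
    intro i
    induction i with
    | zero => exact Submodule.subset_span ⟨0, by simp, rfl⟩
    | succ i ih =>
      rw [pow_succ', Module.End.mul_apply]
      have : Submodule.span K (v '' Set.Iic i) ≤ (Submodule.span K (v '' Set.Iic (i+1))).comap T := by
        rw [Submodule.span_le]
        rintro _ ⟨j, hj, rfl⟩
        simp only [Set.mem_Iic] at hj
        simp only [SetLike.mem_coe, Submodule.mem_comap]
        rw [hTv]
        refine add_mem (Submodule.subset_span ⟨j+1, by simp; omega, rfl⟩)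
          (Submodule.smul_mem _ _ (Submodule.subset_span ⟨j, by simp; omega, rfl⟩))
      exact this ih
  have htop : ⊤ ≤ Submodule.span K (Set.range (fun i : Fin (m+1) => v i)) := by
    rw [← b.span_eq, Submodule.span_le]
    rintro _ ⟨i, rfl⟩
    rw [hb]
    refine Submodule.span_mono ?_ (hsp i)
    rintro _ ⟨j, hj, rfl⟩
    simp only [Set.mem_Iic] at hj
    exact ⟨⟨j, by omega⟩, rfl⟩
  let b' := basisOfTopLeSpanOfCardEqFinrank _ htop (Module.finrank_eq_card_basis b).symm
  refine sumThree_of_basis T m v b' (by simp [b']) α β hα hβ ?_ ?_ (by linear_combination hs)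
  · intro _
    rw [hTv]; simp [d]
  · intro i hi _
    rw [hTv]; simp [d, hi.ne']

lemma SumThree.conj {K V W : Type*} [Field K] [AddCommMonoid V] [Module K V]
    [AddCommMonoid W] [Module K W] (e : V ≃ₗ[K] W) {S : W →ₗ[K] W} (h : SumThree S)
    (T : V →ₗ[K] V) (hT : ∀ x, e (T x) = S (e x)) : SumThree T := by
  obtain ⟨E₁, E₂, E₃, h1, h2, h3, h⟩ := h
  refine ⟨e.symm.conj E₁, e.symm.conj E₂, e.symm.conj E₃, ?_, ?_, ?_, ?_⟩
  · rw [← LinearEquiv.conj_comp, h1]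
  · rw [← LinearEquiv.conj_comp, h2]
  · rw [← LinearEquiv.conj_comp, h3]
  · ext x
    apply e.injective
    rw [hT, h]
    simp [LinearEquiv.conj_apply]

open Polynomial in
lemma sumThree_quot {K : Type*} [Field K] (hK : ∀ s : K, s = 0 ∨ s = 1 ∨ s = 1 + 1)
    (f : K[X]) (hf : f ≠ 0) :
    SumThree (K := K) (V := K[X] ⧸ Ideal.span {f})
      (LinearMap.restrictScalars K (LinearMap.lsmul K[X] (K[X] ⧸ Ideal.span {f}) X)) := by
  let pb := AdjoinRoot.powerBasis hf
  have h : SumThree (LinearMap.mulLeft K (AdjoinRoot.root f)) := by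
    refine sumThree_cyclic hK _ pb.dim (1 : AdjoinRoot f) pb.basis ?_
    intro i
    rw [pb.basis_eq_pow, AdjoinRoot.powerBasis_gen]
    simp [LinearMap.pow_mulLeft]
  let e : (K[X] ⧸ Ideal.span {f}) ≃ₗ[K] AdjoinRoot f :=
    { toFun := fun x => x
      invFun := fun x => x
      map_add' := fun _ _ => rfl
      map_smul' := fun _ _ => rfl
      left_inv := fun _ => rfl
      right_inv := fun _ => rfl }
  refine SumThree.conj e h _ fun x => ?_
  obtain ⟨x, rfl⟩ := Ideal.Quotient.mk_surjective x
  rfl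

open Polynomial in
lemma sumThree_all {K V : Type*} [Field K] (hK : ∀ s : K, s = 0 ∨ s = 1 ∨ s = 1 + 1)
    [AddCommGroup V] [Module K V] [FiniteDimensional K V] (T : V →ₗ[K] V) : SumThree T := by
  classical
  obtain ⟨ι, _, p, hp, e, ⟨φ⟩⟩ := Module.equiv_directSum_of_isTorsion
    (Module.AEval.isTorsion_of_finiteDimensional K V T)
  have hq := fun i => sumThree_quot hK (p i ^ e i) (pow_ne_zero _ (hp i).ne_zero)
  choose E₁ E₂ E₃ h1 h2 h3 h using hq
  let S := LinearMap.restrictScalars K (LinearMap.lsmul K[X] (DirectSum ι fun i => K[X] ⧸ Ideal.span {p i ^ e i}) X)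
  have hS : SumThree S := by
    refine ⟨DFinsupp.mapRange.linearMap E₁, DFinsupp.mapRange.linearMap E₂,
      DFinsupp.mapRange.linearMap E₃, ?_, ?_, ?_, ?_⟩
    · rw [← DFinsupp.mapRange.linearMap_comp]; simp only [h1]
    · rw [← DFinsupp.mapRange.linearMap_comp]; simp only [h2]
    · rw [← DFinsupp.mapRange.linearMap_comp]; simp only [h3]
    · refine LinearMap.ext fun x => DFinsupp.ext fun i => ?_
      have := LinearMap.congr_fun (h i) (x i)
      exact this
  refine SumThree.conj (((Module.AEval'.of T)).trans (φ.restrictScalars K)) hS T ?_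
  intro x
  simp only [LinearEquiv.trans_apply, LinearEquiv.restrictScalars_apply, S, LinearMap.restrictScalars_apply, LinearMap.lsmul_apply]
  rw [← map_smul, Module.AEval'.X_smul_of]

lemma matrix_sumThree {K : Type*} [Field K] (hK : ∀ s : K, s = 0 ∨ s = 1 ∨ s = 1 + 1) (n : ℕ)
    (A : Matrix (Fin n) (Fin n) K) : ∃ E₁ E₂ E₃ : Matrix (Fin n) (Fin n) K,
        E₁ * E₁ = E₁ ∧ E₂ * E₂ = E₂ ∧ E₃ * E₃ = E₃ ∧ A = E₁ + E₂ + E₃ := by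
  obtain ⟨E₁, E₂, E₃, h1, h2, h3, h⟩ := sumThree_all hK (Matrix.toLin' A)
  refine ⟨E₁.toMatrix', E₂.toMatrix', E₃.toMatrix', ?_, ?_, ?_, ?_⟩
  · rw [← LinearMap.toMatrix'_comp, h1]
  · rw [← LinearMap.toMatrix'_comp, h2]
  · rw [← LinearMap.toMatrix'_comp, h3]
  · rw [← map_add, ← map_add, ← h, LinearMap.toMatrix'_toLin']

lemma four_case {A : Type*} [Ring A] [Nontrivial A] (u3 : IsUnit (3 : A)) (u2 : IsUnit (2 : A))
    (u5 : IsUnit (5 : A)) (E F G : A) (hE : E * E = E) (hF : F * F = F) (hG : G * G = G)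
    (h : 4 = E + F + G) : False := by
  have hF' : F = 4 - E - G := by rw [h]; abel
  have cn : ∀ {u x : A}, IsUnit u → u * x = 0 → x = 0 := fun hu hx => by
    simpa using hu.mul_left_cancel (hx.trans (mul_zero _).symm)
  have hB : F + G = 4 - E := by rw [h]; abel
  set D := F - G with hD
  have anti : D * (F + G - 1) + (F + G - 1) * D = 0 := by
    rw [hD]
    have : (F - G) * (F + G - 1) + (F + G - 1) * (F - G) = 2 * (F * F - F) - 2 * (G * G - G) := by
      noncomm_ring
    rw [this, hF, hG]; simp
  have sq : D * D + (F + G - 1) * (F + G - 1) = 1 := by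
    rw [hD]
    have : (F - G) * (F - G) + (F + G - 1) * (F + G - 1) = 2 * (F * F - F) + 2 * (G * G - G) + 1 := by
      noncomm_ring
    rw [this, hF, hG]; simp
  rw [hB] at anti sq
  have a6 : D * E + E * D = 6 * D := by
    have : D * E + E * D = 6 * D - (D * (4 - E - 1) + (4 - E - 1) * D) := by noncomm_ring
    rw [this, anti, sub_zero]
  have EDE : E * D * E = 0 := by
    have : (2 * 2 : A) * (E * D * E) = 0 := by
      have h1 : E * (D * E + E * D) * E = E * (6 * D) * E := by rw [a6]
      have h2 : E * (D * E + E * D) * E = E * D * (E * E) + (E * E) * D * E := by noncomm_ring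
      rw [h2, hE] at h1
      have h3 : (2 * 2 : A) * (E * D * E) = E * (6 * D) * E - (E * D * E + E * D * E) := by noncomm_ring
      rw [h3, h1, sub_self]
    exact cn (u2.mul u2) this
  have ED : E * D = 0 := by
    apply cn u5
    have h1 : E * (D * E + E * D) = E * (6 * D) := by rw [a6]
    have h2 : E * (D * E + E * D) = E * D * E + (E * E) * D := by noncomm_ring
    rw [h2, hE, EDE] at h1
    have h3 : 5 * (E * D) = E * (6 * D) - (0 + E * D) := by noncomm_ring
    rw [h3, h1, sub_self]
  have DE : D * E = 0 := by
    apply cn u5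
    have h1 : (D * E + E * D) * E = (6 * D) * E := by rw [a6]
    have h2 : (D * E + E * D) * E = D * (E * E) + E * D * E := by noncomm_ring
    rw [h2, hE, EDE] at h1
    have h3 : 5 * (D * E) = (6 * D) * E - (D * E + 0) := by noncomm_ring
    rw [h3, h1, sub_self]
  have D0 : D = 0 := by
    rw [ED, DE] at a6
    apply cn (u2.mul u3)
    have : (2 * 3 : A) * D = 6 * D := by noncomm_ring
    rw [this, ← a6]; simp
  rw [D0] at sq
  have s2 : (5 : A) * E = 8 := by
    have : (5 : A) * E = 8 + (E * E - E) + (1 - (0 * 0 + (4 - E - 1) * (4 - E - 1))) := by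
      noncomm_ring
      norm_num
    rw [this, sq, hE]; simp
  have s3 : E = 0 := by
    apply cn u3
    have h1 : 5 * E * E = 8 * E := by rw [s2]
    rw [mul_assoc, hE] at h1
    have : (3 : A) * E = 8 * E - 5 * E := by noncomm_ring
    rw [this, h1, sub_self]
  rw [s3, mul_zero] at s2
  have h8 : (2 * 2 * 2 : A) * 1 = 0 := by rw [s2]; norm_num
  exact one_ne_zero (cn ((u2.mul u2).mul u2) h8)

open Module in
lemma five_key {K V : Type*} [Field K] [CharP K 5] [AddCommGroup V] [Module K V]
    [FiniteDimensional K V] (E F G : Module.End K V)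
    (hE : E * E = E) (hF : F * F = F) (hG : G * G = G) (W : Submodule K V) (c : ℕ)
    (hW : finrank K V ≤ finrank K W + c) (hA : ∀ w ∈ W, (E + F + G) w = (4 : K) • w) :
    ∃ k, 2 * k ≤ finrank K V ∧ finrank K (LinearMap.range E) ≤ k + c ∧
      finrank K V ≤ finrank K (LinearMap.range E) + k + c ∧
      (2 * k = finrank K V → LinearMap.trace K V (F + G) = (finrank K V : K)) := by
  have five : (5 : K) = 0 := by exact_mod_cast CharP.cast_eq_zero K 5
  have two : (2 : K) ≠ 0 := by
    intro h
    have : (1 : K) = 0 := by linear_combination five - 2 * h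
    exact one_ne_zero this
  set D := F - G with hD
  set B := F + G with hB
  have anti : D * B = 2 * D - B * D := by
    have : (F - G) * (F + G) = 2 * (F - G) - (F + G) * (F - G) + 2 * (F * F - F) - 2 * (G * G - G) := by
      noncomm_ring
    rw [hD, hB, this, hF, hG]; simp
  have sq : D * D = 2 * B - B * B := by
    have : (F - G) * (F - G) = 2 * (F + G) - (F + G) * (F + G) + 2 * (F * F - F) + 2 * (G * G - G) := by
      noncomm_ring
    rw [hD, hB, this, hF, hG]; simp
  have antiv : ∀ v, D (B v) = (2 : K) • D v - B (D v) := fun v => by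
    have := LinearMap.congr_fun anti v
    simpa [two_mul, two_smul] using this
  have sqv : ∀ v, D (D v) = (2 : K) • B v - B (B v) := fun v => by
    have := LinearMap.congr_fun sq v
    simpa [two_mul, two_smul] using this
  let U4 := End.eigenspace B (4 : K)
  let U3 := End.eigenspace B (3 : K)
  have m4 : ∀ v, v ∈ U4 ↔ B v = (4 : K) • v := fun v => End.mem_eigenspace_iff
  have m3 : ∀ v, v ∈ U3 ↔ B v = (3 : K) • v := fun v => End.mem_eigenspace_iff
  have D43 : ∀ v ∈ U4, D v ∈ U3 := by
    intro v hv
    rw [m4] at hv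
    rw [m3]
    have := antiv v
    rw [hv, map_smul] at this
    have h2 : B (D v) = (2 : K) • D v - (4 : K) • D v := by rw [this]; abel
    rw [h2, ← sub_smul]
    congr 1; linear_combination -five
  have D34 : ∀ v ∈ U3, D v ∈ U4 := by
    intro v hv
    rw [m3] at hv
    rw [m4]
    have := antiv v
    rw [hv, map_smul] at this
    have h2 : B (D v) = (2 : K) • D v - (3 : K) • D v := by rw [this]; abel
    rw [h2, ← sub_smul]
    congr 1; linear_combination -five
  have DD4 : ∀ v ∈ U4, D (D v) = (2 : K) • v := by
    intro v hv
    rw [m4] at hv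
    rw [sqv, hv, map_smul, hv, smul_smul, smul_smul, ← sub_smul]
    congr 1; linear_combination -2 * five
  have DD3 : ∀ v ∈ U3, D (D v) = (2 : K) • v := by
    intro v hv
    rw [m3] at hv
    rw [sqv, hv, map_smul, hv, smul_smul, smul_smul, ← sub_smul]
    congr 1; linear_combination -five
  have le43 : finrank K U4 ≤ finrank K U3 := by
    refine LinearMap.finrank_le_finrank_of_injective (f := D.restrict D43) ?_
    rw [injective_iff_map_eq_zero]
    rintro ⟨v, hv⟩ h
    have h' : D v = 0 := congrArg Subtype.val h
    have := DD4 v hv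
    rw [h', map_zero] at this
    ext
    simpa [two] using this.symm
  have le34 : finrank K U3 ≤ finrank K U4 := by
    refine LinearMap.finrank_le_finrank_of_injective (f := D.restrict D34) ?_
    rw [injective_iff_map_eq_zero]
    rintro ⟨v, hv⟩ h
    have h' : D v = 0 := congrArg Subtype.val h
    have := DD3 v hv
    rw [h', map_zero] at this
    ext
    simpa [two] using this.symm
  have dis : U4 ⊓ U3 = ⊥ := by
    rw [eq_bot_iff]
    rintro v ⟨h4, h3⟩
    have h4' := (m4 v).1 h4
    have h3' := (m3 v).1 h3
    have : v = (4 : K) • v - (3 : K) • v := by rw [← sub_smul]; norm_num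
    rw [Submodule.mem_bot, this, ← h4', ← h3', sub_self]
  have dim := Submodule.finrank_sup_add_finrank_inf_eq U4 U3
  rw [dis, finrank_bot] at dim
  have hle := Submodule.finrank_le (U4 ⊔ U3)
  have rn := LinearMap.finrank_range_add_finrank_ker E
  have hk : W ⊓ LinearMap.ker E ≤ U4 := by
    rintro v ⟨hw, hv⟩
    rw [m4, ← hA v hw]
    have : E v = 0 := hv
    simp [hB, this]
  have hr : W ⊓ LinearMap.range E ≤ U3 := by
    rintro v ⟨hw, hv⟩
    obtain ⟨x, rfl⟩ := hv
    have e : E (E x) = E x := LinearMap.congr_fun hE x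
    have h1 := hA _ hw
    rw [m3]
    have : B (E x) = (4 : K) • E x - E x := by
      rw [← h1]; simp [hB, e]; abel
    rw [this]
    module
  have hk' := Submodule.finrank_mono hk
  have hr' := Submodule.finrank_mono hr
  have d1 := Submodule.finrank_sup_add_finrank_inf_eq W (LinearMap.ker E)
  have d2 := Submodule.finrank_sup_add_finrank_inf_eq W (LinearMap.range E)
  have l1 := Submodule.finrank_le (W ⊔ LinearMap.ker E)
  have l2 := Submodule.finrank_le (W ⊔ LinearMap.range E)
  refine ⟨finrank K U4, by omega, by omega, by omega, fun hfull => ?_⟩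
  have top : U4 ⊔ U3 = ⊤ := Submodule.eq_top_of_finrank_eq (by omega)
  have DD : D * D = (2 : K) • 1 := by
    ext v
    have hv : v ∈ U4 ⊔ U3 := by rw [top]; trivial
    obtain ⟨x, hx, y, hy, rfl⟩ := Submodule.mem_sup.1 hv
    simp [DD4 x hx, DD3 y hy]
  have t1 : LinearMap.trace K V (D * B * D) = LinearMap.trace K V (B * (D * D)) := by
    rw [mul_assoc, LinearMap.trace_mul_comm, mul_assoc]
  have t2 : D * B * D = 2 * (D * D) - B * (D * D) := by rw [anti]; noncomm_ring
  rw [t2, DD] at t1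
  have e1 : (2 : Module.End K V) * ((2 : K) • 1) = (4 : K) • 1 := by
    rw [mul_smul_comm, mul_one]
    ext v; simp [two_smul]; module
  rw [e1, mul_smul_comm, mul_one, map_sub, map_smul, map_smul, LinearMap.trace_one] at t1
  simp only [smul_eq_mul] at t1
  linear_combination (LinearMap.trace K V B - (finrank K V : K)) * five + t1

lemma idem_trace {K V : Type*} [Field K] [AddCommGroup V] [Module K V]
    [FiniteDimensional K V] (E : Module.End K V) (hE : E * E = E) :
    LinearMap.trace K V E = (Module.finrank K (LinearMap.range E) : K) :=
  (LinearMap.IsIdempotentElem.isProj_range _ hE).trace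

lemma five_case (n : ℕ) (hn : 2 ≤ n) : ∃ A : Matrix (Fin n) (Fin n) (ZMod 5), IsUnit A ∧
    ¬ ∃ E₁ E₂ E₃ : Matrix (Fin n) (Fin n) (ZMod 5),
        E₁ * E₁ = E₁ ∧ E₂ * E₂ = E₂ ∧ E₃ * E₃ = E₃ ∧ A = E₁ + E₂ + E₃ := by
  have d1 : (1 : ZMod 5) ≠ 0 := by decide
  have d4 : (4 : ZMod 5) ≠ 0 := by decide
  have d6 : (1 : ZMod 5) = 4 + 2 := by decide
  have : Fact (Nat.Prime 5) := ⟨by norm_num⟩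
  rcases Nat.even_or_odd' n with ⟨m, hm | hm⟩
  · let i0 : Fin n := ⟨0, by omega⟩
    refine ⟨Matrix.diagonal (fun i => if i = i0 then 1 else 4), ?_, ?_⟩
    · rw [Matrix.isUnit_iff_isUnit_det, Matrix.det_diagonal, isUnit_iff_ne_zero,
        Finset.prod_ne_zero_iff]
      intro i _
      split_ifs
      · exact d1
      · exact d4
    · rintro ⟨E, F, G, hE, hF, hG, h⟩
      have htr : (Matrix.diagonal (fun i : Fin n => if i = i0 then (1 : ZMod 5) else 4)).trace
          = 4 * n + 2 := by
        rw [Matrix.trace_diagonal]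
        have : ∀ i : Fin n, (if i = i0 then (1 : ZMod 5) else 4) = 4 + (if i = i0 then 2 else 0) := by
          intro i; split_ifs
          · exact d6
          · rw [add_zero]
        rw [Finset.sum_congr rfl (fun i _ => this i), Finset.sum_add_distrib]
        simp [mul_comm]
      let W : Submodule (ZMod 5) (Fin n → ZMod 5) := LinearMap.ker (LinearMap.proj i0)
      have hW : Module.finrank (ZMod 5) (Fin n → ZMod 5) ≤ Module.finrank (ZMod 5) W + 1 := by
        have := LinearMap.finrank_range_add_finrank_ker
          (LinearMap.proj i0 : (Fin n → ZMod 5) →ₗ[ZMod 5] ZMod 5)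
        have h2 := Submodule.finrank_le (LinearMap.range (LinearMap.proj i0 : (Fin n → ZMod 5) →ₗ[ZMod 5] ZMod 5))
        rw [Module.finrank_self] at h2
        change _ = _ at this
        have : Module.finrank (ZMod 5) W = Module.finrank (ZMod 5) (LinearMap.ker (LinearMap.proj i0 : (Fin n → ZMod 5) →ₗ[ZMod 5] ZMod 5)) := rfl
        omega
      have hA : ∀ w ∈ W, (Matrix.toLinAlgEquiv' E + Matrix.toLinAlgEquiv' F +
          Matrix.toLinAlgEquiv' G) w = (4 : ZMod 5) • w := by
        intro w hw
        rw [← map_add, ← map_add, ← h]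
        have hw0 : w i0 = 0 := hw
        ext i
        simp only [Matrix.toLinAlgEquiv'_apply, Matrix.mulVec_diagonal, Pi.smul_apply, smul_eq_mul]
        by_cases hi : i = i0
        · subst hi; simp [hw0]
        · simp [hi]
      have hTr : LinearMap.trace (ZMod 5) _ (Matrix.toLinAlgEquiv' E + Matrix.toLinAlgEquiv' F +
          Matrix.toLinAlgEquiv' G) = 4 * n + 2 := by
        rw [← map_add, ← map_add, ← h, ← htr]
        exact Matrix.trace_toLin'_eq _
      have hE' : Matrix.toLinAlgEquiv' E * Matrix.toLinAlgEquiv' E = Matrix.toLinAlgEquiv' E := by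
        rw [← map_mul, hE]
      have hF' : Matrix.toLinAlgEquiv' F * Matrix.toLinAlgEquiv' F = Matrix.toLinAlgEquiv' F := by
        rw [← map_mul, hF]
      have hG' : Matrix.toLinAlgEquiv' G * Matrix.toLinAlgEquiv' G = Matrix.toLinAlgEquiv' G := by
        rw [← map_mul, hG]
      generalize Matrix.toLinAlgEquiv' E = E' at *
      generalize Matrix.toLinAlgEquiv' F = F' at *
      generalize Matrix.toLinAlgEquiv' G = G' at *
      have key : ∀ E F G : Module.End (ZMod 5) (Fin n → ZMod 5), E * E = E → F * F = F → G * G = G →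
          (∀ w ∈ W, (E + F + G) w = (4 : ZMod 5) • w) →
          LinearMap.trace (ZMod 5) _ (E + F + G) = 4 * n + 2 →
          Module.finrank (ZMod 5) (LinearMap.range E) = m := by
        intro E F G hE hF hG hA hT
        obtain ⟨k, h1, h2, h3, h4⟩ := five_key E F G hE hF hG W 1 hW hA
        have hfr : Module.finrank (ZMod 5) (Fin n → ZMod 5) = n := by simp
        rw [hfr] at h1 h3 h4
        by_cases hk : 2 * k = n
        · have h5 := h4 hk
          rw [add_assoc, map_add, h5, idem_trace E hE] at hT
          exfalso
          set r := Module.finrank (ZMod 5) (LinearMap.range E)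
          have : ((r + n : ℕ) : ZMod 5) = ((4 * n + 2 : ℕ) : ZMod 5) := by push_cast; exact hT
          rw [ZMod.natCast_eq_natCast_iff'] at this
          omega
        · omega
      have k1 := key E' F' G' hE' hF' hG' hA hTr
      have k2 := key F' E' G' hF' hE' hG' (by rwa [add_comm F' E']) (by rwa [add_comm F' E'])
      have k3 := key G' E' F' hG' hE' hF' (by rwa [add_assoc, add_comm]) (by rwa [add_assoc, add_comm])
      rw [map_add, map_add, idem_trace _ hE', idem_trace _ hF', idem_trace _ hG', k1, k2, k3] at hTr
      have : ((m + m + m : ℕ) : ZMod 5) = ((4 * n + 2 : ℕ) : ZMod 5) := by push_cast; exact hTr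
      rw [ZMod.natCast_eq_natCast_iff'] at this
      omega
  · refine ⟨Matrix.diagonal (fun i => 4), ?_, ?_⟩
    · rw [Matrix.isUnit_iff_isUnit_det, Matrix.det_diagonal, isUnit_iff_ne_zero,
        Finset.prod_ne_zero_iff]
      intro i _
      exact d4
    · rintro ⟨E, F, G, hE, hF, hG, h⟩
      have hA : ∀ w ∈ (⊤ : Submodule (ZMod 5) (Fin n → ZMod 5)), (Matrix.toLinAlgEquiv' E + Matrix.toLinAlgEquiv' F +
          Matrix.toLinAlgEquiv' G) w = (4 : ZMod 5) • w := by
        intro w hw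
        rw [← map_add, ← map_add, ← h]
        ext i
        simp [Matrix.toLinAlgEquiv'_apply, Matrix.mulVec_diagonal]
      obtain ⟨k, h1, h2, h3, h4⟩ := five_key _ _ _ (by rw [← map_mul, hE]) (by rw [← map_mul, hF])
        (by rw [← map_mul, hG]) ⊤ 0 (by simp) hA
      rw [Module.finrank_fin_fun] at h1 h3
      omega

lemma trace_nat {R : Type*} [CommRing R] [IsDomain R] (n : ℕ) (E : Matrix (Fin n) (Fin n) R)
    (hE : E * E = E) : ∃ k : ℕ, E.trace = k := by
  let K := FractionRing R
  have h := idem_trace (K := K) (Matrix.toLinAlgEquiv' (E.map (algebraMap R K)))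
    (by rw [← map_mul, ← Matrix.map_mul, hE])
  refine ⟨Module.finrank K (LinearMap.range (Matrix.toLinAlgEquiv' (E.map (algebraMap R K)))),
    IsFractionRing.injective R K ?_⟩
  rw [map_natCast, ← h]
  refine Eq.trans ?_ (Matrix.trace_toLin'_eq _).symm
  exact (AddMonoidHom.map_trace (algebraMap R K).toAddMonoidHom E)

lemma exists_unit_trace {R : Type*} [CommRing R] (n : ℕ) (hn : 2 ≤ n) (a : R) :
    ∃ A : Matrix (Fin n) (Fin n) R, IsUnit A ∧ A.trace = a := by
  let i0 : Fin n := ⟨0, by omega⟩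
  let i1 : Fin n := ⟨1, by omega⟩
  have h01 : i0 ≠ i1 := by simp [i0, i1]
  let P : Matrix (Fin n) (Fin n) R := (Equiv.swap i0 i1).permMatrix R
  have hP : P i1 i0 = 1 := by simp [P, Equiv.Perm.permMatrix, PEquiv.toMatrix_apply]
  refine ⟨Matrix.transvection i0 i1 (a - P.trace) * P, ?_, ?_⟩
  · rw [Matrix.isUnit_iff_isUnit_det, Matrix.det_mul, Matrix.det_transvection_of_ne _ _ h01, one_mul,
      Matrix.det_permutation]
    exact (Units.isUnit _).map (Int.castRingHom R)
  · rw [Matrix.transvection, add_mul, one_mul, Matrix.trace_add]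
    have : (Matrix.single i0 i1 (a - P.trace) * P).trace = (a - P.trace) * P i1 i0 := by
      rw [Matrix.trace_single_mul, smul_eq_mul]
    rw [this, hP]; ring

theorem main_aux (R : Type*) [CommRing R]
    [IsDomain R] (n : ℕ) (hn : 2 ≤ n) 
    (H : ∀ A : Matrix (Fin n) (Fin n) R, IsUnit A →
      ∃ E₁ E₂ E₃ : Matrix (Fin n) (Fin n) R,
        E₁ * E₁ = E₁ ∧ E₂ * E₂ = E₂ ∧ E₃ * E₃ = E₃ ∧ A = E₁ + E₂ + E₃) :
    (Nonempty (R ≃+* ZMod 2) ∨ Nonempty (R ≃+* ZMod 3)) := by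
  have hnat : ∀ a : R, ∃ k : ℕ, a = k := by
    intro a
    obtain ⟨A, hA, rfl⟩ := exists_unit_trace n hn a
    obtain ⟨E, F, G, hE, hF, hG, rfl⟩ := H A hA
    obtain ⟨k1, h1⟩ := trace_nat n E hE
    obtain ⟨k2, h2⟩ := trace_nat n F hF
    obtain ⟨k3, h3⟩ := trace_nat n G hG
    exact ⟨k1 + k2 + k3, by rw [Matrix.trace_add, Matrix.trace_add, h1, h2, h3]; push_cast; rfl⟩
  obtain ⟨p, hp⟩ := CharP.exists R
  have pp : p.Prime := by
    refine (CharP.char_is_prime_or_zero R p).resolve_right ?_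
    rintro rfl
    obtain ⟨k, hk⟩ := hnat (-1)
    have : ((k + 1 : ℕ) : R) = 0 := by push_cast; rw [← hk]; ring
    rw [CharP.cast_eq_zero_iff R 0] at this
    omega
  have : Fact p.Prime := ⟨pp⟩
  let φ := ZMod.castHom (dvd_refl p) R
  have e : ZMod p ≃+* R := RingEquiv.ofBijective φ ⟨φ.injective, fun a => by
    obtain ⟨k, rfl⟩ := hnat a
    exact ⟨k, map_natCast φ k⟩⟩
  have H' : ∀ A : Matrix (Fin n) (Fin n) (ZMod p), IsUnit A →
      ∃ E₁ E₂ E₃ : Matrix (Fin n) (Fin n) (ZMod p),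
        E₁ * E₁ = E₁ ∧ E₂ * E₂ = E₂ ∧ E₃ * E₃ = E₃ ∧ A = E₁ + E₂ + E₃ := by
    intro A hA
    let g : Matrix (Fin n) (Fin n) (ZMod p) ≃+* Matrix (Fin n) (Fin n) R := e.mapMatrix
    obtain ⟨E, F, G, hE, hF, hG, h⟩ := H (g A) (hA.map g)
    refine ⟨g.symm E, g.symm F, g.symm G, ?_, ?_, ?_, ?_⟩
    · rw [← map_mul, hE]
    · rw [← map_mul, hF]
    · rw [← map_mul, hG]
    · rw [← map_add, ← map_add, ← h, g.symm_apply_apply]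
  by_cases p2 : p = 2
  · subst p2; exact Or.inl ⟨e.symm⟩
  by_cases p3 : p = 3
  · subst p3; exact Or.inr ⟨e.symm⟩
  exfalso
  by_cases p5 : p = 5
  · subst p5
    obtain ⟨A, hA, hn⟩ := five_case n hn
    exact hn (H' A hA)
  have un : ∀ q : ℕ, q.Prime → p ≠ q → IsUnit ((q : ℕ) : Matrix (Fin n) (Fin n) (ZMod p)) := by
    intro q hq hpq
    have : IsUnit ((q : ℕ) : ZMod p) := by
      rw [isUnit_iff_ne_zero, Ne, ZMod.natCast_eq_zero_iff]
      exact fun h => hpq ((Nat.prime_dvd_prime_iff_eq pp hq).1 h)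
    have := this.map (algebraMap (ZMod p) (Matrix (Fin n) (Fin n) (ZMod p)))
    rwa [map_natCast] at this
  have u2 := un 2 Nat.prime_two p2
  have u3 := un 3 Nat.prime_three p3
  have u5 := un 5 Nat.prime_five p5
  push_cast at u2 u3 u5
  have : Nonempty (Fin n) := ⟨⟨0, by omega⟩⟩
  obtain ⟨E, F, G, hE, hF, hG, h⟩ := H' 4 (by
    have := u2.mul u2
    norm_num at this
    exact this)
  exact four_case u3 u2 u5 E F G hE hF hG h

/-- For an integral domain `R` and `n ≥ 2`, every invertible matrix in `M_n(R)` is a sum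
of three idempotent matrices if and only if `R ≅ ℤ/2` or `R ≅ ℤ/3`. -/
theorem invertible_matrix_sum_three_idempotents_domain_iff (R : Type*) [CommRing R]
    [IsDomain R] (n : ℕ) (hn : 2 ≤ n) :
    (∀ A : Matrix (Fin n) (Fin n) R, IsUnit A →
      ∃ E₁ E₂ E₃ : Matrix (Fin n) (Fin n) R,
        E₁ * E₁ = E₁ ∧ E₂ * E₂ = E₂ ∧ E₃ * E₃ = E₃ ∧ A = E₁ + E₂ + E₃) ↔
    (Nonempty (R ≃+* ZMod 2) ∨ Nonempty (R ≃+* ZMod 3)) := by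
  refine ⟨main_aux R n hn, ?_⟩
  have aux : ∀ (p : ℕ) [Fact p.Prime], (∀ s : ZMod p, s = 0 ∨ s = 1 ∨ s = 1 + 1) →
      (R ≃+* ZMod p) → ∀ A : Matrix (Fin n) (Fin n) R,
      ∃ E₁ E₂ E₃ : Matrix (Fin n) (Fin n) R,
        E₁ * E₁ = E₁ ∧ E₂ * E₂ = E₂ ∧ E₃ * E₃ = E₃ ∧ A = E₁ + E₂ + E₃ := by
    intro p _ hp e A
    let g : Matrix (Fin n) (Fin n) R ≃+* Matrix (Fin n) (Fin n) (ZMod p) := e.mapMatrix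
    obtain ⟨E, F, G, hE, hF, hG, h⟩ := matrix_sumThree hp n (g A)
    refine ⟨g.symm E, g.symm F, g.symm G, ?_, ?_, ?_, ?_⟩
    · rw [← map_mul, hE]
    · rw [← map_mul, hF]
    · rw [← map_mul, hG]
    · rw [← map_add, ← map_add, ← h, g.symm_apply_apply]
  have c2 : ∀ s : ZMod 2, s = 0 ∨ s = 1 ∨ s = 1 + 1 := by decide
  have c3 : ∀ s : ZMod 3, s = 0 ∨ s = 1 ∨ s = 1 + 1 := by decide
  rintro (⟨⟨e⟩⟩ | ⟨⟨e⟩⟩) A -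
  · exact aux 2 c2 e A
  · exact aux 3 c3 e A
end

section
/- Let R be a commutative indecomposable ring and n ≥ 1, and suppose that every matrix in M_n(R) is a sum of three idempotent matrices. Then R is isomorphic to Z_m where m = 2, 3, or 4. -/
open Module

theorem scalar_case {S : Type*} [Ring S] (E P Q u : S) (hu : u * 5 = 1) 
    (hE : E * E = E) (hP : P * P = P) (hQ : Q * Q = Q) (h : -1 = E + P + Q) : (12 : S) = 0 := by
  obtain rfl : Q = -1 - E - P := by rw [h]; abel
  have h1 : 5 * (E * P) = 5 * (P * E) := by
    linear_combination (norm := noncomm_ring) -(P * hQ) + hQ * P + P * hE - hE * P + hP * E - E * hP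
  have h2 : E * P = P * E := by
    have : u * (5 * (E * P)) = u * (5 * (P * E)) := by rw [h1]
    simpa only [← mul_assoc, hu, one_mul] using this
  have h3 : 2 + 4 * E + 4 * P + 2 * (E * P) = 0 := by
    linear_combination (norm := noncomm_ring) hQ - hE - hP + h2
    norm_num
  have h4 : 6 * E + 6 * (E * P) = 0 := by
    linear_combination (norm := noncomm_ring) E * h3 - 4 * hE - 2 * hE * P
  have h4' : 6 * P + 6 * (E * P) = 0 := by
    linear_combination (norm := noncomm_ring) h3 * P - 4 * hP - 2 * E * hP
  have h5 : 12 * (E * P) = 0 := by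
    linear_combination (norm := noncomm_ring) h4 * P - 6 * E * hP
  linear_combination (norm := noncomm_ring) 6 * h3 - 4 * h4 - 4 * h4' + 3 * h5
  norm_num

theorem even_of_anticomm {K V : Type*} [Field K] [AddCommGroup V] [Module K V]
    [FiniteDimensional K V] (h2 : (2 : K) ≠ 0) (T D : End K V) (a b : K) (ha : a ≠ 0) (hb : b ≠ 0)
    (hT : T * T = a • 1) (hD : D * D = b • 1) (hTD : T * D = - (D * T)) :
    Even (finrank K V) := by
  by_contra hodd
  rw [Nat.not_even_iff_odd] at hodd
  have e1 : LinearMap.det T * LinearMap.det T ≠ 0 := by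
    rw [← map_mul, hT, LinearMap.det_smul]; simp [ha]
  have e2 : LinearMap.det D * LinearMap.det D ≠ 0 := by
    rw [← map_mul, hD, LinearMap.det_smul]; simp [hb]
  have e3 : LinearMap.det T * LinearMap.det D = - (LinearMap.det D * LinearMap.det T) := by
    rw [← map_mul, hTD, ← neg_one_smul K (D * T), LinearMap.det_smul, hodd.neg_one_pow]; simp
  have e4 : 2 * (LinearMap.det T * LinearMap.det D) = 0 := by linear_combination e3
  simp_all

theorem idem_anticomm {S : Type*} [Ring S] {P Q : S} (hP : P * P = P) (hQ : Q * Q = Q) :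
    (P + Q - 1) * (P - Q) = -((P - Q) * (P + Q - 1)) := by
  linear_combination (norm := noncomm_ring) 2 * hP - 2 * hQ

theorem idem_sq {S : Type*} [Ring S] {P Q : S} (hP : P * P = P) (hQ : Q * Q = Q) :
    (P - Q) * (P - Q) = 1 - (P + Q - 1) * (P + Q - 1) := by
  linear_combination (norm := noncomm_ring) 2 * hP + 2 * hQ

theorem idem_comm {S : Type*} [Ring S] {P Q : S} (hP : P * P = P) (hQ : Q * Q = Q) :
    ((P + Q - 1) * (P + Q - 1) + 1) * P = P * ((P + Q - 1) * (P + Q - 1) + 1) := by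
  linear_combination (norm := noncomm_ring) Q * hP + hQ * P - hP * Q - P * hQ

theorem end_five {K V : Type*} [Field K] [CharP K 5] [AddCommGroup V] [Module K V] :
    (5 : End K V) = 0 := by
  have h5 : (5 : K) = 0 := by exact_mod_cast CharP.cast_eq_zero K 5
  have := congrArg (algebraMap K (End K V)) h5
  rwa [map_ofNat, map_zero] at this

theorem two_ne {K : Type*} [Field K] [CharP K 5] : (2 : K) ≠ 0 := by
  have h5 : (5 : K) = 0 := by exact_mod_cast CharP.cast_eq_zero K 5
  intro h; apply one_ne_zero (α := K); linear_combination h5 - 2 * h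

theorem odd_case {K V : Type*} [Field K] [CharP K 5] [AddCommGroup V] [Module K V]
    [FiniteDimensional K V] (E P Q : End K V)
    (hE : E * E = E) (hP : P * P = P) (hQ : Q * Q = Q) (h : -1 = E + P + Q) :
    Even (finrank K V) := by
  have h5' : (5 : End K V) = 0 := end_five
  have h2 : (2 : K) ≠ 0 := two_ne
  obtain rfl : E = -1 - P - Q := by rw [h]; abel
  have ht : (P + Q - 1) * (P + Q - 1) = -1 := by 
    linear_combination (norm := noncomm_ring) hE - h5' * P - h5' * Q
  refine even_of_anticomm h2 (P + Q - 1) (P - Q) (-1) 2 (by simp) h2 ?_ ?_ (idem_anticomm hP hQ)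
  · rw [ht]; simp
  · rw [idem_sq hP hQ, ht, two_smul]; simp

theorem trace_idem_end {K V : Type*} [Field K] [AddCommGroup V] [Module K V]
    [FiniteDimensional K V] (h2 : finrank K V = 2) (E : End K V) (hE : E * E = E) :
    (E = 0 ∧ LinearMap.trace K V E = 0) ∨ LinearMap.trace K V E = 1 ∨
      (E = 1 ∧ LinearMap.trace K V E = 2) := by
  have hp := LinearMap.IsIdempotentElem.isProj_range E hE
  have ht := hp.trace
  have hle : finrank K (LinearMap.range E) ≤ 2 := h2 ▸ Submodule.finrank_le _
  rcases hr : finrank K (LinearMap.range E) with _ | _ | _ | k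
  · left
    rw [Submodule.finrank_eq_zero, LinearMap.range_eq_bot] at hr
    exact ⟨hr, by simp [hr]⟩
  · right; left; simpa [hr] using ht
  · right; right
    have htop := Submodule.eq_top_of_finrank_eq (hr.trans h2.symm)
    refine ⟨?_, by simpa [hr] using ht⟩
    ext v
    obtain ⟨w, rfl⟩ : v ∈ LinearMap.range E := htop ▸ Submodule.mem_top
    exact congrArg (fun f : End K V => f w) hE
  · omega

theorem two_dim {K V : Type*} [Field K] [CharP K 5] [AddCommGroup V] [Module K V]
    [FiniteDimensional K V] (hd : finrank K V = 2) (E P Q : End K V)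
    (hE : E * E = E) (hP : P * P = P) (hQ : Q * Q = Q) (e : V) (he : e ≠ 0)
    (hA : (E + P + Q) e = e) (htr : LinearMap.trace K V (E + P + Q) = 0) : False := by
  have h5 : (5 : K) = 0 := by exact_mod_cast CharP.cast_eq_zero K 5
  have h2 : (2 : K) ≠ 0 := two_ne
  have h3 : (3 : K) ≠ 0 := by
    intro h; apply one_ne_zero (α := K); linear_combination 2 * h - h5
  have h4 : (4 : K) ≠ 0 := by
    intro h; apply one_ne_zero (α := K); linear_combination h5 - h
  have key : ∀ F : End K V, F * F = F → (2 + F) e = e → False := by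
    intro F hF h
    have h1 : F e = -e := by
      have : (2 : End K V) e + F e = e := h
      rw [show (2 : End K V) = 1 + 1 by norm_num] at this
      simp only [LinearMap.add_apply, End.one_apply] at this
      linear_combination (norm := module) this
    have h3 : F (F e) = F e := congrArg (fun f : End K V => f e) hF
    rw [h1, map_neg, h1] at h3
    have : (2 : K) • e = 0 := by rw [two_smul]; linear_combination (norm := module) h3
    exact (smul_ne_zero h2 he) this
  have e2 : (1 : End K V) + 1 = 2 := by norm_num
  rw [map_add, map_add] at htr
  rcases trace_idem_end hd E hE with ⟨a, ta⟩ | ta | ⟨a, ta⟩ <;>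
  rcases trace_idem_end hd P hP with ⟨b, tb⟩ | tb | ⟨b, tb⟩ <;>
  rcases trace_idem_end hd Q hQ with ⟨c, tc⟩ | tc | ⟨c, tc⟩ <;>
  rw [ta, tb, tc] at htr <;> try norm_num at htr
  all_goals first
    | exact h2 htr
    | exact h3 htr
    | exact h4 htr
    | exact one_ne_zero (by linear_combination htr - h5)
    | skip
  · subst a b c; exact he (by simpa using hA.symm)
  · subst b c; exact key E hE ((congrArg (fun g : End K V => g e) (by rw [← e2]; abel)).trans hA)
  · subst a c; exact key P hP ((congrArg (fun g : End K V => g e) (by rw [← e2]; abel)).trans hA)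
  · subst a b; exact key Q hQ ((congrArg (fun g : End K V => g e) (by rw [← e2])).trans hA)

theorem even_case {K V : Type*} [Field K] [CharP K 5] [AddCommGroup V] [Module K V]
    [FiniteDimensional K V] (hev : Even (finrank K V)) (e : V) (f : V →ₗ[K] K) (hfe : f e = 1)
    (E P Q : End K V) (hE : E * E = E) (hP : P * P = P) (hQ : Q * Q = Q)
    (h : -1 + (2 : K) • f.smulRight e = E + P + Q) : False := by
  have h5' : (5 : End K V) = 0 := end_five
  have h5 : (5 : K) = 0 := by exact_mod_cast CharP.cast_eq_zero K 5
  have h2 : (2 : K) ≠ 0 := two_ne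
  have he : e ≠ 0 := by rintro rfl; simp at hfe
  obtain ⟨M, hM⟩ : ∃ M : End K V, M = (2 : K) • f.smulRight e := ⟨_, rfl⟩
  obtain ⟨J, hJ⟩ : ∃ J : End K V, J = 3 - E := ⟨_, rfl⟩
  obtain ⟨T, hT⟩ : ∃ T : End K V, T = P + Q - 1 := ⟨_, rfl⟩
  obtain ⟨F, hF⟩ : ∃ F : End K V, F = T * T + 1 := ⟨_, rfl⟩
  rw [← hM] at h
  have hMv : ∀ v, M v = (2 * f v) • e := by intro v; simp [hM, mul_smul]
  have hJJ : J * J = -1 := by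
    rw [hJ]
    linear_combination (norm := noncomm_ring) hE + 2 * h5' - h5' * E
    norm_num
  have hTJ : T = J + M := by
    rw [hT, hJ]
    linear_combination (norm := noncomm_ring) -h - h5'
    norm_num
  have hFM : F = J * M + M * J + M * M := by
    rw [hF, hTJ]
    linear_combination (norm := noncomm_ring) hJJ
  have hFv : ∀ v, F v = (2 * f v) • J e + (2 * f (J v) + 4 * f v) • e := by
    intro v
    rw [hFM]
    simp only [LinearMap.add_apply, End.mul_apply, hMv, map_smul, hfe, smul_eq_mul]
    module
  have hFP : F * P = P * F := by rw [hF, hT]; exact idem_comm hP hQ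
  have hFQ : F * Q = Q * F := by
    rw [hF, hT, add_comm P Q]; exact idem_comm hQ hP
  have hFT : F * T = T * F := by rw [hF]; noncomm_ring
  have hJJv : ∀ v, J (J v) = - v := fun v => congrArg (fun g : End K V => g v) hJJ
  -- kernel
  have hker : Even (finrank K (LinearMap.ker F)) := by
    have inv : ∀ G : End K V, F * G = G * F → ∀ v ∈ LinearMap.ker F, G v ∈ LinearMap.ker F := by
      intro G hG v hv
      have : F (G v) = G (F v) := congrArg (fun g : End K V => g v) hG
      rw [LinearMap.mem_ker] at hv ⊢
      rw [this, hv, map_zero]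
    have hFD : F * (P - Q) = (P - Q) * F := by rw [mul_sub, sub_mul, hFP, hFQ]
    refine even_of_anticomm h2 (T.restrict (inv T hFT)) ((P - Q).restrict (inv _ hFD)) (-1) 2
      (by simp) h2 ?_ ?_ ?_
    · ext ⟨v, hv⟩
      have h1 : T (T v) + v = 0 := by
        have : F v = 0 := hv
        rw [hF] at this; exact this
      simpa using eq_neg_of_add_eq_zero_left h1
    · ext ⟨v, hv⟩
      have h1 : T (T v) + v = 0 := by
        have : F v = 0 := hv
        rw [hF] at this; exact this
      have h3 : (P - Q) ((P - Q) v) = v - T (T v) := by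
        have := congrArg (fun g : End K V => g v) (idem_sq hP hQ)
        rw [← hT] at this
        exact this
      have : (P - Q) ((P - Q) v) = (2 : K) • v := by
        rw [h3, eq_neg_of_add_eq_zero_left h1]; module
      simpa using this
    · ext ⟨v, hv⟩
      have := congrArg (fun g : End K V => g v) (idem_anticomm hP hQ)
      rw [← hT] at this
      simpa using this
  have hrn := LinearMap.finrank_range_add_finrank_ker F
  have hspan : LinearMap.range F ≤ Submodule.span K {e, J e} := by
    rintro _ ⟨v, rfl⟩
    rw [hFv, Submodule.mem_span_pair]
    exact ⟨_, _, add_comm _ _⟩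
  have hs2 : finrank K (Submodule.span K {e, J e}) ≤ 2 := by
    classical
    have := finrank_span_finset_le_card (R := K) ({e, J e} : Finset V)
    rw [Set.finrank] at this
    rw [Finset.coe_insert, Finset.coe_singleton] at this
    exact this.trans Finset.card_le_two
  have hle := Submodule.finrank_mono hspan
  have hne : finrank K (LinearMap.range F) ≠ 0 := by
    intro h0
    rw [Submodule.finrank_eq_zero, LinearMap.range_eq_bot] at h0
    have h1 := hFv e
    rw [h0, LinearMap.zero_apply, hfe] at h1
    have h3 := congrArg f h1
    simp only [map_zero, map_add, map_smul, hfe, smul_eq_mul] at h3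
    have h4 : f (J e) = -1 := by
      have : (2 * 2) * (f (J e) + 1) = 0 := by linear_combination -h3
      rcases mul_eq_zero.1 this with h | h
      · exact absurd h (mul_ne_zero h2 h2)
      · linear_combination h
    rw [h4] at h1
    have h6 : (2 : K) • (J e + e) = 0 := by linear_combination (norm := module) -h1
    have h7 : J e = -e := eq_neg_of_add_eq_zero_left ((smul_eq_zero.1 h6).resolve_left h2)
    have h8 := hJJv e
    rw [h7, map_neg, h7] at h8
    have : (2 : K) • e = 0 := by linear_combination (norm := module) h8
    exact smul_ne_zero h2 he this
  have hr2 : finrank K (LinearMap.range F) = 2 := by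
    have : Even (finrank K (LinearMap.range F)) := by
      rw [← hrn, Nat.even_add] at hev
      exact hev.2 hker
    obtain ⟨k, hk⟩ := this
    omega
  have hU : LinearMap.range F = Submodule.span K {e, J e} :=
    Submodule.eq_of_le_of_finrank_le hspan (by omega)
  have invR : ∀ G : End K V, F * G = G * F → ∀ v ∈ LinearMap.range F, G v ∈ LinearMap.range F := by
    rintro G hG _ ⟨v, rfl⟩
    exact ⟨G v, congrArg (fun g : End K V => g v) hG⟩
  have heU : e ∈ LinearMap.range F := hU ▸ Submodule.subset_span (by simp)
  have hMU : ∀ v ∈ LinearMap.range F, M v ∈ LinearMap.range F := by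
    intro v _
    rw [hMv]; exact Submodule.smul_mem _ _ heU
  have hEe : E = -1 + M - P - Q := by rw [h]; abel
  have hEU : ∀ v ∈ LinearMap.range F, E v ∈ LinearMap.range F := by
    intro v hv
    rw [hEe]
    exact Submodule.sub_mem _ (Submodule.sub_mem _ (Submodule.add_mem _
      (Submodule.neg_mem _ hv) (hMU v hv)) (invR P hFP v hv)) (invR Q hFQ v hv)
  have hsum : E.restrict hEU + P.restrict (invR P hFP) + Q.restrict (invR Q hFQ) =
      -1 + (2 : K) • (f.comp (LinearMap.range F).subtype).smulRight
        (⟨e, heU⟩ : LinearMap.range F) := by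
    ext ⟨v, hv⟩
    have := congrArg (fun g : End K V => g v) h
    rw [hM] at this
    simpa using this.symm
  refine two_dim hr2 (E.restrict hEU) (P.restrict (invR P hFP)) (Q.restrict (invR Q hFQ))
    ?_ ?_ ?_ ⟨e, heU⟩ (by simpa using he) ?_ ?_
  · ext ⟨v, hv⟩; exact congrArg (fun g : End K V => g v) hE
  · ext ⟨v, hv⟩; exact congrArg (fun g : End K V => g v) hP
  · ext ⟨v, hv⟩; exact congrArg (fun g : End K V => g v) hQ
  · rw [hsum]
    ext
    simp [hfe]
    module
  · rw [hsum, map_add, map_neg, map_smul, LinearMap.trace_smulRight, LinearMap.trace_one, hr2]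
    simp [hfe]

theorem no_five {K : Type*} [Field K] [CharP K 5] {n : ℕ} (hn : 1 ≤ n)
    (h : ∀ A : Matrix (Fin n) (Fin n) K,
      ∃ E₁ E₂ E₃ : Matrix (Fin n) (Fin n) K,
        E₁ * E₁ = E₁ ∧ E₂ * E₂ = E₂ ∧ E₃ * E₃ = E₃ ∧ A = E₁ + E₂ + E₃) : False := by
  have h' : ∀ A : End K (Fin n → K), ∃ E P Q : End K (Fin n → K),
      E * E = E ∧ P * P = P ∧ Q * Q = Q ∧ A = E + P + Q := by
    intro A
    let φ : Matrix (Fin n) (Fin n) K ≃ₐ[K] End K (Fin n → K) := Matrix.toLinAlgEquiv'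
    obtain ⟨E, P, Q, hE, hP, hQ, hA⟩ := h (φ.symm A)
    refine ⟨φ E, φ P, φ Q, ?_, ?_, ?_, ?_⟩
    · rw [← map_mul, hE]
    · rw [← map_mul, hP]
    · rw [← map_mul, hQ]
    · rw [← map_add, ← map_add, ← hA, AlgEquiv.apply_symm_apply]
  obtain ⟨E, P, Q, hE, hP, hQ, hA⟩ := h' (-1)
  have hev := odd_case E P Q hE hP hQ hA
  let i : Fin n := ⟨0, hn⟩
  obtain ⟨E, P, Q, hE, hP, hQ, hA⟩ :=
    h' (-1 + (2 : K) • (LinearMap.proj i : (Fin n → K) →ₗ[K] K).smulRight (Pi.single i 1))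
  exact even_case hev (Pi.single i 1) (LinearMap.proj i) (by simp) E P Q hE hP hQ hA

open Polynomial

theorem trace_idem {R : Type*} [CommRing R] [Nontrivial R] 
    (hind : ∀ e : R, e * e = e → e = 0 ∨ e = 1) {n : ℕ} (E : Matrix (Fin n) (Fin n) R)
    (hE : E * E = E) : ∃ k : ℕ, E.trace = k := by
  set q : R[X] := (1 + (X : R[X]) • E.map C).det with hq
  set p : R[X] := q.comp (X - 1) with hp
  -- evaluation
  have hev : ∀ (S : Type _) [CommRing S] (φ : R →+* S) (s : S),
      eval₂ φ s p = (1 + (s - 1) • E.map φ).det := by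
    intro S _ φ s
    rw [hp, eval₂_comp, hq, ← coe_eval₂RingHom, RingHom.map_det]
    congr 1
    ext i j
    simp [Matrix.one_apply]
    split_ifs <;> simp [mul_comm]
  have hmul : ∀ (S : Type _) [CommRing S] (φ : R →+* S) (s t : S),
      eval₂ φ s p * eval₂ φ t p = eval₂ φ (s * t) p := by
    intro S _ φ s t
    rw [hev, hev, hev, ← Matrix.det_mul]
    have : E.map φ * E.map φ = E.map φ := by rw [← Matrix.map_mul, hE]
    congr 1
    simp only [add_mul, mul_add, one_mul, mul_one, Matrix.smul_mul, Matrix.mul_smul, this,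
      smul_smul]
    rw [add_assoc, ← add_smul, ← add_smul]
    congr 2
    ring
  have hcoef : ∀ j, p * C (p.coeff j) = monomial j (p.coeff j) := by
    intro j
    have h1 := hmul R[X][X] (C.comp C) (C X) X
    have h2 : eval₂ ((C : R[X] →+* R[X][X]).comp C) (C X) p = C p := by
      rw [← hom_eval₂, eval₂_C_X]
    have h3 : eval₂ ((C : R[X] →+* R[X][X]).comp C) X p = p.map C := by
      rw [← eval₂_map, eval₂_C_X]
    have h4 : (eval₂ ((C : R[X] →+* R[X][X]).comp C) (C X * X) p).coeff j
        = monomial j (p.coeff j) := by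
      rw [eval₂_eq_sum_range, finsetSum_coeff]
      simp only [mul_pow, ← C_pow, RingHom.comp_apply, ← mul_assoc, ← C_mul, coeff_C_mul_X_pow]
      rw [Finset.sum_ite_eq]
      split_ifs with hj
      · rw [C_mul_X_pow_eq_monomial]
      · rw [coeff_eq_zero_of_natDegree_lt (by simpa using hj)]; simp
    rw [← h4, ← h1, h2, h3, coeff_C_mul, coeff_map]
  have h1 : p.eval 1 = 1 := by
    have := hev R (RingHom.id R) 1
    rw [eval, this]; simp
  have htr : E.trace = (derivative p).eval 1 := by
    rw [hp, derivative_comp]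
    simp [hq, Matrix.derivative_det_one_add_X_smul, eval_comp]
  have hp0 : p ≠ 0 := by intro h; simp [h] at h1
  obtain ⟨j, hj⟩ : ∃ j, p.coeff j ≠ 0 := by
    by_contra! hc
    exact hp0 (Polynomial.ext (by simpa using hc))
  have hj1 : p.coeff j = 1 := by
    refine (hind _ ?_).resolve_left hj
    have := congrArg (fun q => coeff q j) (hcoef j)
    simpa using this
  have := hcoef j
  rw [hj1] at this
  simp only [map_one, mul_one] at this
  refine ⟨j, ?_⟩
  rw [htr, this, derivative_monomial]
  simp

theorem final {R : Type*} [CommRing R] [Nontrivial R] 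
    (hind : ∀ e : R, e * e = e → e = 0 ∨ e = 1) (h12 : (12 : R) = 0)
    (hs : ∀ r : R, ∃ k : ℕ, r = k) :
    ∃ m : ℕ, (m = 2 ∨ m = 3 ∨ m = 4) ∧ Nonempty (R ≃+* ZMod m) := by
  refine ⟨ringChar R, ?_, ?_⟩
  · have hne : ringChar R ≠ 1 := CharP.ringChar_ne_one
    rcases hind 4 (by linear_combination h12) with h | h
    · have : ringChar R ∣ 4 := (ringChar.spec R 4).1 (by exact_mod_cast h)
      have hle := Nat.le_of_dvd (by norm_num) this
      interval_cases ringChar R <;> simp_all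
    · have : ringChar R ∣ 3 := (ringChar.spec R 3).1 (by push_cast; linear_combination h)
      have hle := Nat.le_of_dvd (by norm_num) this
      interval_cases ringChar R <;> simp_all
  · refine ⟨(RingEquiv.ofBijective (ZMod.castHom (dvd_refl (ringChar R)) R) ⟨ZMod.castHom_injective R, ?_⟩).symm⟩
    intro r
    obtain ⟨k, rfl⟩ := hs r
    exact ⟨k, by simp⟩


/-- If `R` is a commutative indecomposable ring (its only idempotents are `0` and `1`),
`n ≥ 1`, and every matrix in `M_n(R)` is a sum of three idempotents, then `R ≅ ℤ/m`
with `m = 2`, `3` or `4`. -/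
theorem indecomposable_comm_ring_of_sum_three_idempotents (R : Type*) [CommRing R]
    [Nontrivial R] (hind : ∀ e : R, e * e = e → e = 0 ∨ e = 1) (n : ℕ) (hn : 1 ≤ n)
    (h : ∀ A : Matrix (Fin n) (Fin n) R,
      ∃ E₁ E₂ E₃ : Matrix (Fin n) (Fin n) R,
        E₁ * E₁ = E₁ ∧ E₂ * E₂ = E₂ ∧ E₃ * E₃ = E₃ ∧ A = E₁ + E₂ + E₃) :
    ∃ m : ℕ, (m = 2 ∨ m = 3 ∨ m = 4) ∧ Nonempty (R ≃+* ZMod m) := by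
  have hs : ∀ r : R, ∃ k : ℕ, r = k := by
    intro r
    obtain ⟨E, P, Q, hE, hP, hQ, hA⟩ := h (Matrix.single ⟨0, hn⟩ ⟨0, hn⟩ r)
    obtain ⟨a, ha⟩ := trace_idem hind E hE
    obtain ⟨b, hb⟩ := trace_idem hind P hP
    obtain ⟨c, hc⟩ := trace_idem hind Q hQ
    refine ⟨a + b + c, ?_⟩
    have := congrArg Matrix.trace hA
    rw [Matrix.trace_single_eq_same, Matrix.trace_add, Matrix.trace_add, ha, hb, hc] at this
    exact_mod_cast this
  have h5 : IsUnit (5 : R) := by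
    by_contra hu
    obtain ⟨I, hI, h5I⟩ := exists_max_ideal_of_mem_nonunits (a := (5 : R)) hu
    letI : Field (R ⧸ I) := Ideal.Quotient.field I
    have h50 : ((5 : ℕ) : R ⧸ I) = 0 := by
      have := Ideal.Quotient.eq_zero_iff_mem.2 h5I
      rw [map_ofNat] at this
      exact_mod_cast this
    haveI : CharP (R ⧸ I) 5 := by
      have hd := (ringChar.spec (R ⧸ I) 5).1 h50
      refine ringChar.of_eq ?_
      exact ((Nat.dvd_prime (by norm_num)).1 hd).resolve_left CharP.ringChar_ne_one
    refine no_five (K := R ⧸ I) hn ?_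
    intro A
    obtain ⟨g, hg⟩ := (Ideal.Quotient.mk_surjective (I := I)).hasRightInverse
    let φ := (Ideal.Quotient.mk I).mapMatrix (m := Fin n)
    obtain ⟨E, P, Q, hE, hP, hQ, hA⟩ := h (A.map g)
    refine ⟨φ E, φ P, φ Q, ?_, ?_, ?_, ?_⟩
    · rw [← map_mul, hE]
    · rw [← map_mul, hP]
    · rw [← map_mul, hQ]
    · rw [← map_add, ← map_add, ← hA]
      ext i j
      exact (hg (A i j)).symm
  have h12 : (12 : R) = 0 := by
    obtain ⟨u, hu⟩ := h5.exists_left_inv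
    obtain ⟨E, P, Q, hE, hP, hQ, hA⟩ := h (-1)
    have h1 := scalar_case E P Q (algebraMap R (Matrix (Fin n) (Fin n) R) u)
      (by rw [← map_ofNat (algebraMap R (Matrix (Fin n) (Fin n) R)) 5, ← map_mul, hu, map_one])
      hE hP hQ hA
    have h2 := congrFun (congrFun h1 ⟨0, hn⟩) ⟨0, hn⟩
    simpa [Matrix.ofNat_apply] using h2
  exact final hind h12 hs
end
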